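/- arXiv:1506.08927 — 3 statements merged into one kernel-verified Lean document; each statement's English description precedes it below -/
import Mathlib

section
/- Assume 0 ≤ i < k < j < ℓ ≤ n. Then Hom(X_{i,j}, X_{k,ℓ}) ≠ 0 if and only if ε_k = − and ε_j = −; and Hom(X_{k,ℓ}, X_{i,j}) ≠ 0 if and only if ε_k = + and ε_j = +. -/
namespace ESPaper

/-- Source of arrow `a m` (between vertices `m` and `m+1`): `m` if `ε m = +` (true). -/
def asrc (ε : ℕ → Bool) (m : ℕ) : ℕ := if ε m then m else m + 1

/-- Target of arrow `a m`. -/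
def atgt (ε : ℕ → Bool) (m : ℕ) : ℕ := if ε m then m + 1 else m

/-- A representation of the type `A_n` quiver `Q_ε`: finite dimensional vector spaces at the
vertices `1, …, n` (the spaces at the remaining indices are required to be trivial, so that
the maps attached to indices outside `1, …, n-1` carry no information) together with a
linear map along each arrow `a m : asrc ε m → atgt ε m`, `1 ≤ m ≤ n-1`. -/
structure Rep (K : Type) [Field K] (n : ℕ) (ε : ℕ → Bool) : Type 1 where
  V : ℕ → Type
  [instAdd : ∀ m, AddCommGroup (V m)]
  [instMod : ∀ m, Module K (V m)]
  [instFin : ∀ m, FiniteDimensional K (V m)]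
  triv : ∀ m, m = 0 ∨ n < m → Subsingleton (V m)
  φ : ∀ m, V (asrc ε m) →ₗ[K] V (atgt ε m)

attribute [instance] Rep.instAdd Rep.instMod Rep.instFin

/-- A morphism of representations of `Q_ε`. -/
structure RepHom {K : Type} [Field K] {n : ℕ} {ε : ℕ → Bool} (A B : Rep K n ε) where
  app : ∀ m, A.V m →ₗ[K] B.V m
  comm : ∀ m, (app (atgt ε m)).comp (A.φ m) = (B.φ m).comp (app (asrc ε m))

/-- Vertex space of the indecomposable `X_{i,j}` (for `0 ≤ i < j ≤ n`): `K` at the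
vertices `i+1, …, j` and `0` elsewhere. -/
def XV (K : Type) [Field K] (n i j m : ℕ) : Submodule K K :=
  if i + 1 ≤ m ∧ m ≤ j ∧ m ≤ n then ⊤ else ⊥

/-- Arrow map of the indecomposable `X_{i,j}`: the identity whenever both endpoints of the
arrow lie in the support, and zero otherwise. -/
def Xφ (K : Type) [Field K] (n : ℕ) (ε : ℕ → Bool) (i j m : ℕ) :
    XV K n i j (asrc ε m) →ₗ[K] XV K n i j (atgt ε m) :=
  if h : i + 1 ≤ atgt ε m ∧ atgt ε m ≤ j ∧ atgt ε m ≤ n then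
    LinearMap.codRestrict _ (XV K n i j (asrc ε m)).subtype
      (fun x => by simp [XV, h.1, h.2.1, h.2.2])
  else 0

/-- The indecomposable representation `X_{i,j}` of `Q_ε`. -/
def Xrep (K : Type) [Field K] (n : ℕ) (ε : ℕ → Bool) (i j : ℕ) : Rep K n ε where
  V m := XV K n i j m
  instAdd _ := inferInstance
  instMod _ := inferInstance
  instFin _ := inferInstance
  triv m hm := by
    have hneg : ¬ (i + 1 ≤ m ∧ m ≤ j ∧ m ≤ n) := by omega
    have hbot : XV K n i j m = ⊥ := by unfold XV; rw [if_neg hneg]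
    show Subsingleton (XV K n i j m)
    rw [hbot]
    infer_instance
  φ m := Xφ K n ε i j m

variable {K : Type} [Field K]

/-- `Hom(A, B) = 0`. -/
def homZero {n : ℕ} {ε : ℕ → Bool} (A B : Rep K n ε) : Prop :=
  ∀ θ : RepHom A B, ∀ m, θ.app m = 0

/-- `Hom(A, B) ≠ 0`. -/
def homNonzero {n : ℕ} {ε : ℕ → Bool} (A B : Rep K n ε) : Prop :=
  ∃ θ : RepHom A B, ∃ m, θ.app m ≠ 0

/-- `0 → B → E → A → 0` is a short exact sequence. -/
def IsSES {n : ℕ} {ε : ℕ → Bool} {B E A : Rep K n ε}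
    (f : RepHom B E) (g : RepHom E A) : Prop :=
  (∀ m, Function.Injective (f.app m)) ∧ (∀ m, Function.Surjective (g.app m)) ∧
    (∀ m, LinearMap.range (f.app m) = LinearMap.ker (g.app m))

/-- The short exact sequence `0 → B → E → A → 0` splits. -/
def Splits {n : ℕ} {ε : ℕ → Bool} {E A : Rep K n ε} (g : RepHom E A) : Prop :=
  ∃ s : RepHom A E, ∀ m, (g.app m).comp (s.app m) = LinearMap.id

/-- `Ext¹(A, B) ≠ 0`: there is a nonsplit short exact sequence `0 → B → E → A → 0`. -/
def extNonzero {n : ℕ} {ε : ℕ → Bool} (A B : Rep K n ε) : Prop :=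
  ∃ (E : Rep K n ε) (f : RepHom B E) (g : RepHom E A), IsSES f g ∧ ¬ Splits g

/-- `Ext¹(A, B) = 0`. -/
def extZero {n : ℕ} {ε : ℕ → Bool} (A B : Rep K n ε) : Prop := ¬ extNonzero A B

/-- `(U, V)` is an exceptional pair: `Hom(V,U) = 0` and `Ext¹(V,U) = 0`. -/
def ExcPair {n : ℕ} {ε : ℕ → Bool} (U V : Rep K n ε) : Prop := homZero V U ∧ extZero V U

def inS (n i j m : ℕ) : Prop := i + 1 ≤ m ∧ m ≤ j ∧ m ≤ n

theorem mem_XV (K : Type) [Field K] (n i j m : ℕ) (x : K) :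
    x ∈ XV K n i j m ↔ (inS n i j m ∨ x = 0) := by
  unfold XV inS
  split_ifs with h
  · simp [h]
  · simp only [h, false_or, Submodule.mem_bot]

theorem Xφ_val (K : Type) [Field K] (n : ℕ) (ε : ℕ → Bool) (i j m : ℕ)
    (x : XV K n i j (asrc ε m)) (h : inS n i j (atgt ε m)) :
    ((Xφ K n ε i j m x : XV K n i j (atgt ε m)) : K) = x := by
  unfold inS at h
  unfold Xφ
  rw [dif_pos h]
  rfl

theorem X_zero (K : Type) [Field K] (n : ℕ) (i j m : ℕ)
    (x : XV K n i j m) (h : ¬ inS n i j m) : (x : K) = 0 := by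
  have := (mem_XV K n i j m x).1 x.2
  tauto

theorem hom_fwd (K : Type) [Field K] (n : ℕ) (ε : ℕ → Bool) (i j k l : ℕ)
    (H : homNonzero (Xrep K n ε i j) (Xrep K n ε k l)) :
    ∃ c : ℕ → K, (∀ m, c m ≠ 0 → inS n i j m ∧ inS n k l m) ∧
      (∀ m, inS n i j (asrc ε m) → inS n k l (atgt ε m) → c (atgt ε m) = c (asrc ε m)) ∧
      ∃ m, c m ≠ 0 := by
  classical
  obtain ⟨⟨app, comm⟩, m0, hm0⟩ := H
  change ∀ m, XV K n i j m →ₗ[K] XV K n k l m at app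
  change ∀ m, (app (atgt ε m)).comp (Xφ K n ε i j m)
    = (Xφ K n ε k l m).comp (app (asrc ε m)) at comm
  change app m0 ≠ 0 at hm0
  let u : ∀ m, XV K n i j m := fun m => ⟨if inS n i j m then 1 else 0, by
    rw [mem_XV]; split_ifs with h <;> simp [h]⟩
  have hu : ∀ m, inS n i j m → (u m : K) = 1 := fun m h => by simp [u, h]
  have hu0 : ∀ m, ¬ inS n i j m → u m = 0 := fun m h => by
    apply Subtype.ext; simp [u, h]
  refine ⟨fun m => (app m (u m) : K), ?_, ?_, ?_⟩
  · intro m hm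
    constructor
    · by_contra h
      apply hm
      simp [hu0 m h]
    · by_contra h
      exact hm (X_zero K n k l m _ h)
  · intro m hs ht
    have e := congrArg (Subtype.val) (LinearMap.congr_fun (comm m) (u (asrc ε m)))
    simp only [LinearMap.comp_apply] at e
    rw [Xφ_val K n ε k l m _ ht] at e
    simp only
    rw [← e]
    congr 2
    apply Subtype.ext
    by_cases h : inS n i j (atgt ε m)
    · rw [Xφ_val K n ε i j m _ h, hu _ h, hu _ hs]
    · rw [X_zero K n i j _ _ h, X_zero K n i j _ _ h]
  · refine ⟨m0, fun h => hm0 ?_⟩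
    have h' : app m0 (u m0) = 0 := Subtype.ext h
    apply LinearMap.ext
    intro x
    have hx : x = (x : K) • u m0 := by
      apply Subtype.ext
      by_cases hS : inS n i j m0
      · simp [hu _ hS]
      · simp [X_zero K n i j m0 x hS]
    rw [hx, map_smul, h']
    simp

theorem hom_bwd (K : Type) [Field K] (n : ℕ) (ε : ℕ → Bool) (i j k l : ℕ)
    (c : ℕ → K) (hc : ∀ m, c m ≠ 0 → inS n i j m ∧ inS n k l m)
    (hcomm : ∀ m, inS n i j (asrc ε m) → inS n k l (atgt ε m) → c (atgt ε m) = c (asrc ε m))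
    (hne : ∃ m, c m ≠ 0) : homNonzero (Xrep K n ε i j) (Xrep K n ε k l) := by
  classical
  let app : ∀ m, XV K n i j m →ₗ[K] XV K n k l m := fun m =>
    LinearMap.codRestrict _ (c m • (XV K n i j m).subtype) (fun x => by
      rw [mem_XV]
      by_cases h : c m = 0
      · right; simp [h]
      · left; exact (hc m h).2)
  have happ : ∀ m x, (app m x : K) = c m * x := fun m x => rfl
  have comm : ∀ m, (app (atgt ε m)).comp (Xφ K n ε i j m)
      = (Xφ K n ε k l m).comp (app (asrc ε m)) := by
    intro m
    apply LinearMap.ext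
    intro x
    apply Subtype.ext
    simp only [LinearMap.comp_apply]
    by_cases ht : inS n k l (atgt ε m)
    · rw [Xφ_val K n ε k l m _ ht, happ, happ]
      by_cases hs : inS n i j (asrc ε m)
      · rw [← hcomm m hs ht]
        by_cases h : inS n i j (atgt ε m)
        · rw [Xφ_val K n ε i j m _ h]
        · have : c (atgt ε m) = 0 := by
            by_contra h0
            exact h (hc _ h0).1
          simp [this]
      · have : x = 0 := Subtype.ext (X_zero K n i j _ x hs)
        simp [this]
    · rw [X_zero K n k l _ _ ht, X_zero K n k l _ _ ht]
  obtain ⟨m, hm⟩ := hne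
  refine ⟨⟨app, comm⟩, m, fun h => hm ?_⟩
  change app m = 0 at h
  have e := congrArg Subtype.val (LinearMap.congr_fun h
    ⟨1, (mem_XV K n i j m 1).2 (Or.inl (hc m hm).1)⟩)
  rw [happ] at e
  simpa using e

/-- A function constant along a segment. -/
theorem const_seg {K : Type} (c : ℕ → K) (k j : ℕ)
    (h : ∀ m, k + 1 ≤ m → m + 1 ≤ j → c (m + 1) = c m) :
    ∀ m, k + 1 ≤ m → m ≤ j → c m = c (k + 1) := by
  intro m hm
  induction m, hm using Nat.le_induction with
  | base => intro _; rfl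
  | succ m hm ih => intro hj; rw [h m hm hj, ih (by omega)]

/-- Lemma 3.9 (interlaced case), Hom part. -/
theorem hom_interlaced (K : Type) [Field K] (n : ℕ) (ε : ℕ → Bool) (i k j l : ℕ)
    (h1 : i < k) (h2 : k < j) (h3 : j < l) (h4 : l ≤ n) :
    (homNonzero (Xrep K n ε i j) (Xrep K n ε k l) ↔ ε k = false ∧ ε j = false) ∧
    (homNonzero (Xrep K n ε k l) (Xrep K n ε i j) ↔ ε k = true ∧ ε j = true) := by
  classical
  refine ⟨⟨fun H => ?_, fun H => ?_⟩, ⟨fun H => ?_, fun H => ?_⟩⟩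
  · obtain ⟨c, hc, hcomm, m, hm⟩ := hom_fwd K n ε i j k l H
    have hseg := const_seg c k j (fun m h h' => by
      have := hcomm m
      unfold asrc atgt inS at this
      cases hε : ε m <;> simp [hε] at this <;> grind)
    have hk : c k = 0 := by
      by_contra h0; have := hc k h0; unfold inS at this; omega
    have hj : c (j + 1) = 0 := by
      by_contra h0; have := hc _ h0; unfold inS at this; omega
    have hm1 := hc m hm
    unfold inS at hm1
    have e1 := hseg m (by omega) (by omega)
    have e2 := hseg j (by omega) (by omega)
    have a1 := hcomm k
    have a2 := hcomm j
    unfold asrc atgt inS at a1 a2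
    constructor
    · by_contra hε
      simp [hε] at a1
      grind
    · by_contra hε
      simp [hε] at a2
      grind
  · refine hom_bwd K n ε i j k l (fun m => if k + 1 ≤ m ∧ m ≤ j then 1 else 0) ?_ ?_
      ⟨j, by simp; omega⟩
    · intro m hm
      have : k + 1 ≤ m ∧ m ≤ j := by by_contra h; exact hm (if_neg h)
      unfold inS; omega
    · intro m
      unfold asrc atgt inS
      cases hε : ε m <;> simp <;> intros <;> congr 1 <;> grind
  · obtain ⟨c, hc, hcomm, m, hm⟩ := hom_fwd K n ε k l i j H
    have hseg := const_seg c k j (fun m h h' => by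
      have := hcomm m
      unfold asrc atgt inS at this
      cases hε : ε m <;> simp [hε] at this <;> grind)
    have hk : c k = 0 := by
      by_contra h0; have := hc k h0; unfold inS at this; omega
    have hj : c (j + 1) = 0 := by
      by_contra h0; have := hc _ h0; unfold inS at this; omega
    have hm1 := hc m hm
    unfold inS at hm1
    have e1 := hseg m (by omega) (by omega)
    have e2 := hseg j (by omega) (by omega)
    have a1 := hcomm k
    have a2 := hcomm j
    unfold asrc atgt inS at a1 a2
    constructor
    · by_contra hε
      simp [hε] at a1
      grind
    · by_contra hε
      simp [hε] at a2
      grind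
  · refine hom_bwd K n ε k l i j (fun m => if k + 1 ≤ m ∧ m ≤ j then 1 else 0) ?_ ?_
      ⟨j, by simp; omega⟩
    · intro m hm
      have : k + 1 ≤ m ∧ m ≤ j := by by_contra h; exact hm (if_neg h)
      unfold inS; omega
    · intro m
      unfold asrc atgt inS
      cases hε : ε m <;> simp <;> intros <;> congr 1 <;> grind


end ESPaper
end

section
/- Assume 0 ≤ i < k < j < ℓ ≤ n. Then Ext^1(X_{i,j}, X_{k,ℓ}) ≠ 0 if and only if ε_k = + and ε_j = +; and Ext^1(X_{k,ℓ}, X_{i,j}) ≠ 0 if and only if ε_k = − and ε_j = −. -/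
namespace ESPaper

variable {K : Type} [Field K]

theorem ext_iff_coc {n : ℕ} {ε : ℕ → Bool} (A B : Rep K n ε) :
    extNonzero A B ↔ ∃ c : ∀ m, A.V (asrc ε m) →ₗ[K] B.V (atgt ε m),
      ¬ ∃ h : ∀ m, A.V m →ₗ[K] B.V m, ∀ m,
        c m = (h (atgt ε m)).comp (A.φ m) - (B.φ m).comp (h (asrc ε m)) := by
  constructor
  · rintro ⟨E, f, g, ⟨hf, hg, hfg⟩, hns⟩
    have hσ : ∀ m, ∃ σ : A.V m →ₗ[K] E.V m, (g.app m).comp σ = LinearMap.id := fun m =>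
      LinearMap.exists_rightInverse_of_surjective _ (LinearMap.range_eq_top.2 (hg m))
    choose σ hσ using hσ
    have hσ' : ∀ m x, g.app m (σ m x) = x := fun m x => LinearMap.congr_fun (hσ m) x
    have hgc : ∀ m x, g.app _ (E.φ m x) = A.φ m (g.app _ x) := fun m x =>
      LinearMap.congr_fun (g.comm m) x
    have hfc : ∀ m x, f.app _ (B.φ m x) = E.φ m (f.app _ x) := fun m x =>
      LinearMap.congr_fun (f.comm m) x
    have hc : ∀ m, ∃ c : A.V (asrc ε m) →ₗ[K] B.V (atgt ε m),
        ∀ x, f.app _ (c x) = E.φ m (σ _ x) - σ _ (A.φ m x) := by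
      intro m
      let d : A.V (asrc ε m) →ₗ[K] E.V (atgt ε m) :=
        (E.φ m).comp (σ _) - (σ _).comp (A.φ m)
      have hd : ∀ x, d x ∈ LinearMap.range (f.app (atgt ε m)) := by
        intro x
        rw [hfg, LinearMap.mem_ker]
        simp [d, hgc, hσ']
      let e := LinearEquiv.ofInjective (f.app (atgt ε m)) (hf _)
      refine ⟨e.symm.toLinearMap.comp (d.codRestrict _ hd), fun x => ?_⟩
      have := congrArg Subtype.val (e.apply_symm_apply (d.codRestrict _ hd x))
      simpa [e, d] using this
    choose c hc using hc
    refine ⟨c, ?_⟩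
    rintro ⟨h, hh⟩
    apply hns
    refine ⟨⟨fun m => σ m + (f.app m).comp (h m), fun m => ?_⟩, fun m => ?_⟩
    · ext x
      have e1 := hc m x
      rw [hh m] at e1
      simp only [LinearMap.sub_apply, LinearMap.comp_apply, map_sub, hfc] at e1
      simp only [LinearMap.add_apply, LinearMap.comp_apply, map_add]
      have e2 := sub_eq_sub_iff_add_eq_add.1 e1
      rw [add_comm, e2, add_comm]
    · ext x
      have : g.app m (f.app m (h m x)) = 0 := by
        rw [← LinearMap.mem_ker, ← hfg]; exact ⟨_, rfl⟩
      simp [hσ', this]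
  · rintro ⟨c, hc⟩
    let E : Rep K n ε :=
      { V := fun m => A.V m × B.V m
        triv := fun m hm => by
          have := A.triv m hm
          have := B.triv m hm
          infer_instance
        φ := fun m => LinearMap.prod ((A.φ m).comp (LinearMap.fst K _ _))
          ((B.φ m).comp (LinearMap.snd K _ _) + (c m).comp (LinearMap.fst K _ _)) }
    let f : RepHom B E := ⟨fun m => LinearMap.inr K (A.V m) (B.V m), fun m => by
      apply LinearMap.ext; intro x
      change ((0 : A.V _), B.φ m x) = (A.φ m 0, B.φ m x + c m 0)
      simp⟩
    let g : RepHom E A := ⟨fun m => LinearMap.fst K (A.V m) (B.V m), fun m => by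
      apply LinearMap.ext; intro x; rfl⟩
    refine ⟨E, f, g, ⟨fun m => LinearMap.inr_injective, fun m => LinearMap.fst_surjective,
      fun m => LinearMap.range_inr K (A.V m) (B.V m)⟩, ?_⟩
    rintro ⟨s, hs⟩
    apply hc
    refine ⟨fun m => (LinearMap.snd K (A.V m) (B.V m)).comp (s.app m), fun m => ?_⟩
    apply LinearMap.ext; intro x
    have h1 : (s.app _ (A.φ m x)).2 =
        B.φ m (s.app _ x).2 + c m (s.app _ x).1 :=
      congrArg Prod.snd (LinearMap.congr_fun (s.comm m) x)
    have h2 : (s.app (asrc ε m) x).1 = x := LinearMap.congr_fun (hs _) x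
    rw [h2] at h1
    change c m x = (s.app _ (A.φ m x)).2 - B.φ m (s.app _ x).2
    rw [h1]; abel

def In (n p q m : ℕ) : Prop := p + 1 ≤ m ∧ m ≤ q ∧ m ≤ n

instance (n p q m : ℕ) : Decidable (In n p q m) := by unfold In; infer_instance

theorem XV_top {n p q m : ℕ} (h : In n p q m) (x : K) : x ∈ XV K n p q m := by
  unfold In at h; unfold XV; rw [if_pos h]; trivial

theorem XV_bot {n p q m : ℕ} (h : ¬ In n p q m) (x : XV K n p q m) : (x : K) = 0 := by
  obtain ⟨x, hx⟩ := x
  unfold In at h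
  unfold XV at hx
  rw [if_neg h] at hx
  simpa using hx

def lin (n p q r s m m' : ℕ) (γ : K) : XV K n p q m →ₗ[K] XV K n r s m' :=
  if h : In n r s m' then
    LinearMap.codRestrict _ (γ • (XV K n p q m).subtype) (fun _ => XV_top h _)
  else 0

theorem lin_apply (n p q r s m m' : ℕ) (γ : K) (x : XV K n p q m) :
    (lin n p q r s m m' γ x : K) = if In n r s m' then γ * x else 0 := by
  unfold lin
  split_ifs with h <;> simp

theorem exists_scalar {n p q r s m m' : ℕ} (c : XV K n p q m →ₗ[K] XV K n r s m') :
    ∃ γ : K, ∀ x, (c x : K) = γ * x := by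
  by_cases h : In n p q m
  · refine ⟨c ⟨1, XV_top h 1⟩, fun x => ?_⟩
    have : x = (x : K) • (⟨1, XV_top h 1⟩ : XV K n p q m) := by ext; simp
    conv_lhs => rw [this]
    rw [map_smul]
    simp [mul_comm]
  · refine ⟨0, fun x => ?_⟩
    have : x = 0 := by ext; simp [XV_bot h x]
    simp [this]

theorem Xφ_apply (n : ℕ) (ε : ℕ → Bool) (p q m : ℕ) (x : XV K n p q (asrc ε m)) :
    (Xφ K n ε p q m x : K) = if In n p q (atgt ε m) then (x : K) else 0 := by
  by_cases h : In n p q (atgt ε m)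
  · have h' := h
    unfold In at h'
    simp only [Xφ, dif_pos h', if_pos h]; rfl
  · have h' := h
    unfold In at h'
    simp only [Xφ, dif_neg h', if_neg h]; rfl

theorem ext_iff_scalar {n : ℕ} {ε : ℕ → Bool} (p q r s : ℕ) :
    extNonzero (Xrep K n ε p q) (Xrep K n ε r s) ↔ ∃ γ : ℕ → K, ¬ ∃ η : ℕ → K, ∀ m,
      In n p q (asrc ε m) → In n r s (atgt ε m) →
      γ m = (if In n p q (atgt ε m) then η (atgt ε m) else 0) -
        (if In n r s (asrc ε m) then η (asrc ε m) else 0) := by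
  rw [ext_iff_coc]
  change (∃ c : ∀ m, XV K n p q (asrc ε m) →ₗ[K] XV K n r s (atgt ε m),
      ¬ ∃ h : ∀ m, XV K n p q m →ₗ[K] XV K n r s m, ∀ m,
        c m = (h (atgt ε m)).comp (Xφ K n ε p q m) - (Xφ K n ε r s m).comp (h (asrc ε m))) ↔ _
  constructor
  · rintro ⟨c, hc⟩
    have := fun m => exists_scalar (K := K) (n := n) (p := p) (q := q) (r := r) (s := s) (c m)
    choose γ hγ using this
    refine ⟨γ, ?_⟩
    rintro ⟨η, hη⟩
    apply hc
    refine ⟨fun m => lin n p q r s m m (η m), fun m => ?_⟩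
    apply LinearMap.ext; intro x
    apply Subtype.ext
    change (c m x : K) =
      (lin n p q r s _ _ (η (atgt ε m)) (Xφ K n ε p q m x) : K) -
      (Xφ K n ε r s m (lin n p q r s _ _ (η (asrc ε m)) x) : K)
    rw [hγ, lin_apply, Xφ_apply, Xφ_apply, lin_apply]
    by_cases hs : In n p q (asrc ε m)
    · by_cases ht : In n r s (atgt ε m)
      · rw [hη m hs ht, if_pos ht, if_pos ht]
        split_ifs <;> ring
      · rw [if_neg ht, if_neg ht, ← hγ, XV_bot ht]; simp
    · rw [XV_bot hs]; simp
  · rintro ⟨γ, hγ⟩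
    refine ⟨fun m => lin n p q r s _ _ (γ m), ?_⟩
    rintro ⟨h, hh⟩
    have := fun m => exists_scalar (K := K) (n := n) (p := p) (q := q) (r := r) (s := s) (h m)
    choose η hη using this
    apply hγ
    refine ⟨η, fun m hs ht => ?_⟩
    let x : XV K n p q (asrc ε m) := ⟨1, XV_top hs 1⟩
    have e : (lin n p q r s _ (atgt ε m) (γ m) x : K) =
        (h (atgt ε m) (Xφ K n ε p q m x) : K) -
        (Xφ K n ε r s m (h (asrc ε m) x) : K) :=
      congrArg Subtype.val (LinearMap.congr_fun (hh m) x)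
    rw [hη, lin_apply, Xφ_apply, Xφ_apply, hη, if_pos ht, if_pos ht] at e
    have e3 : (h (asrc ε m) x : K) = η (asrc ε m) * x := hη _ x
    have e4 : ¬ In n r s (asrc ε m) → η (asrc ε m) = 0 := by
      intro hn
      rw [XV_bot hn] at e3
      simpa [x] using e3.symm
    have hx : (x : K) = 1 := rfl
    rw [hx] at e
    rw [mul_one, mul_one] at e
    rw [e]
    congr 1
    · split_ifs <;> simp
    · split_ifs with h5
      · rfl
      · exact e4 h5

theorem comb1 {n : ℕ} {ε : ℕ → Bool} (i k j l : ℕ)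
    (h1 : i < k) (h2 : k < j) (h3 : j < l) (h4 : l ≤ n) :
    extNonzero (Xrep K n ε i j) (Xrep K n ε k l) ↔ ε k = true ∧ ε j = true := by
  rw [ext_iff_scalar]
  constructor
  · rintro ⟨γ, hγ⟩
    by_contra hne
    apply hγ
    let S : ℕ → K := fun m => ∑ r ∈ Finset.range m, (if ε r then γ r else - γ r)
    have hS : ∀ m, S (m+1) = S m + (if ε m then γ m else - γ m) := fun m =>
      Finset.sum_range_succ _ _
    obtain ⟨C, hC1, hC2⟩ : ∃ C : K, (ε k = true → C = S k) ∧ (ε k = false → C = S (j+1)) := by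
      refine ⟨if ε k then S k else S (j+1), fun h => by simp [h], fun h => by simp [h]⟩
    refine ⟨fun m => S m - C, fun m hs ht => ?_⟩
    beta_reduce
    have hSm := hS m
    unfold In asrc atgt at *
    by_cases hm : m = k
    · subst hm
      cases h : ε m <;> simp only [h, if_true, if_false, Bool.false_eq_true] at hs ht hSm ⊢
      · omega
      · rw [if_pos (by omega), if_neg (by omega), hSm, hC1 h]; ring
    by_cases hm' : m = j
    · subst hm'
      cases h : ε m <;> simp only [h, if_true, if_false, Bool.false_eq_true] at hs ht hSm ⊢
      · omega
      · have : ε k = false := by simpa [h] using hne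
        rw [if_neg (by omega), if_pos (by omega), hC2 this, hSm]; ring
    · cases h : ε m <;> simp only [h, if_true, if_false, Bool.false_eq_true] at hs ht hSm ⊢
      all_goals rw [if_pos (by omega), if_pos (by omega), hSm]; ring
  · rintro ⟨hk, hj⟩
    refine ⟨fun m => if m = k then 1 else 0, ?_⟩
    rintro ⟨η, hη⟩
    unfold In asrc atgt at hη
    have a : ∀ d, k + 1 + d ≤ j → η (k + 1 + d) = 1 := by
      intro d
      induction d with
      | zero =>
        intro _
        have := hη k
        simp only [hk, if_true] at this
        have := this (by omega) (by omega)
        rw [if_pos (by omega), if_neg (by omega)] at this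
        simpa using this.symm
      | succ d ih =>
        intro hd
        have e := ih (by omega)
        have := hη (k + 1 + d)
        beta_reduce at this
        rw [if_neg (by omega : ¬ k + 1 + d = k)] at this
        cases h : ε (k + 1 + d) <;>
          simp only [h, if_true, if_false, Bool.false_eq_true] at this
        all_goals
          have := this (by omega) (by omega)
          rw [if_pos (by omega), if_pos (by omega), e] at this
          rw [← add_assoc]
        · exact (sub_eq_zero.1 this.symm).symm
        · exact (sub_eq_zero.1 this.symm)
    have b := a (j - k - 1) (by omega)
    rw [show k + 1 + (j - k - 1) = j by omega] at b
    have := hη j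
    simp only [hj, if_true] at this
    have := this (by omega) (by omega)
    rw [if_neg (by omega), if_neg (by omega), if_pos (by omega), b] at this
    simp at this

theorem comb2 {n : ℕ} {ε : ℕ → Bool} (i k j l : ℕ)
    (h1 : i < k) (h2 : k < j) (h3 : j < l) (h4 : l ≤ n) :
    extNonzero (Xrep K n ε k l) (Xrep K n ε i j) ↔ ε k = false ∧ ε j = false := by
  rw [ext_iff_scalar]
  constructor
  · rintro ⟨γ, hγ⟩
    by_contra hne
    apply hγ
    let S : ℕ → K := fun m => ∑ r ∈ Finset.range m, (if ε r then γ r else - γ r)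
    have hS : ∀ m, S (m+1) = S m + (if ε m then γ m else - γ m) := fun m =>
      Finset.sum_range_succ _ _
    obtain ⟨C, hC1, hC2⟩ : ∃ C : K, (ε k = true → C = S (j+1)) ∧ (ε k = false → C = S k) := by
      refine ⟨if ε k then S (j+1) else S k, fun h => by simp [h], fun h => by simp [h]⟩
    refine ⟨fun m => S m - C, fun m hs ht => ?_⟩
    beta_reduce
    have hSm := hS m
    unfold In asrc atgt at *
    by_cases hm : m = k
    · subst hm
      cases h : ε m <;> simp only [h, if_true, if_false, Bool.false_eq_true] at hs ht hSm ⊢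
      · rw [if_neg (by omega), if_pos (by omega), hSm, hC2 h]; ring
      · omega
    by_cases hm' : m = j
    · subst hm'
      cases h : ε m <;> simp only [h, if_true, if_false, Bool.false_eq_true] at hs ht hSm ⊢
      · have : ε k = true := by simpa [h] using hne
        rw [if_pos (by omega), if_neg (by omega), hC1 this, hSm]; ring
      · omega
    · cases h : ε m <;> simp only [h, if_true, if_false, Bool.false_eq_true] at hs ht hSm ⊢
      all_goals rw [if_pos (by omega), if_pos (by omega), hSm]; ring
  · rintro ⟨hk, hj⟩
    refine ⟨fun m => if m = k then -1 else 0, ?_⟩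
    rintro ⟨η, hη⟩
    unfold In asrc atgt at hη
    have a : ∀ d, k + 1 + d ≤ j → η (k + 1 + d) = 1 := by
      intro d
      induction d with
      | zero =>
        intro _
        have := hη k
        simp only [hk, if_true, if_false, Bool.false_eq_true] at this
        have := this (by omega) (by omega)
        rw [if_neg (by omega), if_pos (by omega)] at this
        simpa using this.symm
      | succ d ih =>
        intro hd
        have e := ih (by omega)
        have := hη (k + 1 + d)
        beta_reduce at this
        rw [if_neg (by omega : ¬ k + 1 + d = k)] at this
        cases h : ε (k + 1 + d) <;>
          simp only [h, if_true, if_false, Bool.false_eq_true] at this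
        all_goals
          have := this (by omega) (by omega)
          rw [if_pos (by omega), if_pos (by omega), e] at this
          rw [← add_assoc]
        · exact (sub_eq_zero.1 this.symm).symm
        · exact (sub_eq_zero.1 this.symm)
    have b := a (j - k - 1) (by omega)
    rw [show k + 1 + (j - k - 1) = j by omega] at b
    have := hη j
    simp only [hj, if_true, if_false, Bool.false_eq_true] at this
    have := this (by omega) (by omega)
    rw [if_neg (by omega), if_pos (by omega), if_neg (by omega), b] at this
    simp at this

/-- Lemma 3.9 (interlaced case), Ext part. -/
theorem ext_interlaced (K : Type) [Field K] (n : ℕ) (ε : ℕ → Bool) (i k j l : ℕ)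
    (h1 : i < k) (h2 : k < j) (h3 : j < l) (h4 : l ≤ n) :
    (extNonzero (Xrep K n ε i j) (Xrep K n ε k l) ↔ ε k = true ∧ ε j = true) ∧
    (extNonzero (Xrep K n ε k l) (Xrep K n ε i j) ↔ ε k = false ∧ ε j = false) :=
  ⟨comb1 i k j l h1 h2 h3 h4, comb2 i k j l h1 h2 h3 h4⟩

end ESPaper
end

section
/- Assume 0 ≤ i < k < ℓ < j ≤ n. Then Hom(X_{i,j}, X_{k,ℓ}) ≠ 0 if and only if ε_k = − and ε_ℓ = +; and Hom(X_{k,ℓ}, X_{i,j}) ≠ 0 if and only if ε_k = + and ε_ℓ = −. -/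
namespace ESPaper

variable {K : Type} [Field K]

theorem XV_mem {K : Type} [Field K] {n i j m : ℕ} (h : inS n i j m) (x : K) :
    x ∈ XV K n i j m := by
  unfold inS at h
  simp [XV, h]

theorem XV_zero {K : Type} [Field K] {n i j m : ℕ} (h : ¬ inS n i j m) (x : XV K n i j m) :
    (x : K) = 0 := by
  have hb : XV K n i j m = ⊥ := by unfold XV; exact if_neg h
  have : (x : K) ∈ (⊥ : Submodule K K) := hb.le x.2
  simpa using this

theorem Xφ_apply_s3 {K : Type} [Field K] {n : ℕ} {ε : ℕ → Bool} {i j m : ℕ}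
    (h : inS n i j (atgt ε m)) (x : XV K n i j (asrc ε m)) :
    (Xφ K n ε i j m x : K) = x := by
  have e : Xφ K n ε i j m = LinearMap.codRestrict _ (XV K n i j (asrc ε m)).subtype
      (fun x => XV_mem h _) := dif_pos h
  rw [e]
  rfl

theorem hom_iff {K : Type} [Field K] {n : ℕ} {ε : ℕ → Bool} (a b c d : ℕ) :
    homNonzero (Xrep K n ε a b) (Xrep K n ε c d) ↔
    ∃ u : ℕ → K, (∀ m, u m ≠ 0 → inS n a b m ∧ inS n c d m) ∧
      (∀ m, inS n a b (asrc ε m) → inS n c d (atgt ε m) → u (atgt ε m) = u (asrc ε m)) ∧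
      ∃ m, u m ≠ 0 := by
  classical
  constructor
  · rintro ⟨θ, m0, hm0⟩
    let f : ∀ m, XV K n a b m →ₗ[K] XV K n c d m := θ.app
    let u : ℕ → K := fun m => if h : inS n a b m then (f m ⟨1, XV_mem h 1⟩ : K) else 0
    have hu : ∀ m (x : XV K n a b m), (f m x : K) = x * u m := by
      intro m x
      by_cases h : inS n a b m
      · have hx : x = (x : K) • (⟨1, XV_mem h 1⟩ : XV K n a b m) := by
          ext; simp
        conv_lhs => rw [hx, map_smul]
        simp [u, h]
      · have hx : x = 0 := by ext; simpa using XV_zero h x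
        simp [hx]
    refine ⟨u, ?_, ?_, m0, ?_⟩
    · intro m hm
      by_cases h : inS n a b m
      · refine ⟨h, ?_⟩
        by_contra h'
        apply hm
        simp only [u, h, dif_pos]
        exact XV_zero h' _
      · simp [u, h] at hm
    · intro m hs ht
      have hc := congrArg (fun g => g ⟨1, XV_mem hs 1⟩) (θ.comm m)
      have hc2 : f (atgt ε m) (Xφ K n ε a b m ⟨1, XV_mem hs 1⟩)
        = Xφ K n ε c d m (f (asrc ε m) ⟨1, XV_mem hs 1⟩) := hc
      have hc3 := congrArg (Subtype.val) hc2
      rw [hu, Xφ_apply_s3 ht, hu] at hc3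
      by_cases h : inS n a b (atgt ε m)
      · rw [Xφ_apply_s3 h] at hc3
        simpa using hc3
      · have : u (atgt ε m) = 0 := by simp [u, h]
        rw [this] at hc3 ⊢
        simpa using hc3
    · intro h0
      apply hm0
      change f m0 = 0
      ext x
      rw [hu, h0]; simp
  · rintro ⟨u, hu, hc, m0, hm0⟩
    have hmem : ∀ m (x : XV K n a b m), (x : K) * u m ∈ XV K n c d m := by
      intro m x
      by_cases h : u m = 0
      · simp [h]
      · exact XV_mem (hu m h).2 _
    let f : ∀ m, XV K n a b m →ₗ[K] XV K n c d m := fun m =>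
      { toFun := fun x => ⟨x * u m, hmem m x⟩
        map_add' := by intro x y; ext; simp [add_mul]
        map_smul' := by intro r x; ext; simp [mul_assoc] }
    have hf : ∀ m x, (f m x : K) = x * u m := fun m x => rfl
    refine ⟨⟨f, ?_⟩, m0, ?_⟩
    · intro m
      apply LinearMap.ext
      intro (x : XV K n a b (asrc ε m))
      change f (atgt ε m) (Xφ K n ε a b m x) = Xφ K n ε c d m (f (asrc ε m) x)
      apply Subtype.ext
      by_cases ht : inS n c d (atgt ε m)
      · rw [hf, Xφ_apply_s3 ht, hf]
        by_cases hs : inS n a b (asrc ε m)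
        · rw [← hc m hs ht]
          by_cases h : inS n a b (atgt ε m)
          · rw [Xφ_apply_s3 h]
          · have : u (atgt ε m) = 0 := by
              by_contra h'
              exact h (hu _ h').1
            simp [this]
        · have hx : x = 0 := by ext; simpa using XV_zero hs x
          simp [hx]
      · rw [XV_zero ht, XV_zero ht]
    · intro h0
      have := congrArg (fun g : XV K n a b m0 →ₗ[K] XV K n c d m0 =>
        (g ⟨1, XV_mem (hu m0 hm0).1 1⟩ : K)) (show f m0 = 0 from h0)
      simp [hf] at this
      exact hm0 this

theorem const_on {K : Type} {u : ℕ → K} {k l : ℕ}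
    (h : ∀ m, k + 1 ≤ m → m + 1 ≤ l → u m = u (m + 1)) (m : ℕ) (h1 : k + 1 ≤ m) (h2 : m ≤ l) :
    u m = u (k + 1) := by
  induction m, h1 using Nat.le_induction with
  | base => rfl
  | succ m hm ih => rw [← h m hm h2]; exact ih (by omega)

/-- Lemma 3.10 (nested case), Hom part. -/
theorem hom_nested (K : Type) [Field K] (n : ℕ) (ε : ℕ → Bool) (i k l j : ℕ)
    (h1 : i < k) (h2 : k < l) (h3 : l < j) (h4 : j ≤ n) :
    (homNonzero (Xrep K n ε i j) (Xrep K n ε k l) ↔ ε k = false ∧ ε l = true) ∧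
    (homNonzero (Xrep K n ε k l) (Xrep K n ε i j) ↔ ε k = true ∧ ε l = false) := by
  classical
  rw [hom_iff, hom_iff]
  constructor
  · constructor
    · rintro ⟨u, hu, hc, m0, hm0⟩
      have hst : ∀ m, k + 1 ≤ m → m + 1 ≤ l → u m = u (m + 1) := by
        intro m ha hb
        have := hc m
        cases he : ε m <;> simp [asrc, atgt, he, inS] at this
        · exact this (by omega) (by omega) (by omega) (by omega) (by omega) (by omega)
        · exact (this (by omega) (by omega) (by omega) (by omega) (by omega) (by omega)).symm
      have hs := (hu m0 hm0).2
      have e0 := const_on hst m0 hs.1 hs.2.1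
      have el := const_on hst l (by omega) le_rfl
      have hk0 : u k = 0 := by
        by_contra h; have := (hu k h).2.1; omega
      have hl0 : u (l + 1) = 0 := by
        by_contra h; have := (hu _ h).2.2.1; omega
      rw [e0] at hm0
      constructor
      · by_contra he
        simp only [Bool.not_eq_true, Bool.not_eq_false] at he
        have := hc k
        simp [asrc, atgt, he, inS] at this
        exact hm0 ((this (by omega) (by omega) (by omega) (by omega) (by omega)).trans hk0)
      · by_contra he
        simp only [Bool.not_eq_true, Bool.not_eq_false] at he
        have := hc l
        simp [asrc, atgt, he, inS] at this
        exact hm0 (el.symm.trans ((this (by omega) (by omega) (by omega) (by omega) (by omega)).trans hl0))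
    · rintro ⟨ek, el⟩
      refine ⟨fun m => if k + 1 ≤ m ∧ m ≤ l then 1 else 0, ?_, ?_, l, ?_⟩
      · intro m hm
        have : k + 1 ≤ m ∧ m ≤ l := by by_contra h; exact hm (if_neg h)
        unfold inS; omega
      · intro m
        have a1 : m = k → ε m = false := by rintro rfl; exact ek
        have a2 : m = l → ε m = true := by rintro rfl; exact el
        intro hs ht
        unfold inS at hs ht
        have hiff : (k + 1 ≤ atgt ε m ∧ atgt ε m ≤ l) ↔ (k + 1 ≤ asrc ε m ∧ asrc ε m ≤ l) := by
          cases he : ε m <;> simp [asrc, atgt, he] at * <;> omega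
        simp only [hiff]
      · simp; omega
  · constructor
    · rintro ⟨u, hu, hc, m0, hm0⟩
      have hst : ∀ m, k + 1 ≤ m → m + 1 ≤ l → u m = u (m + 1) := by
        intro m ha hb
        have := hc m
        cases he : ε m <;> simp [asrc, atgt, he, inS] at this
        · exact this (by omega) (by omega) (by omega) (by omega) (by omega) (by omega)
        · exact (this (by omega) (by omega) (by omega) (by omega) (by omega) (by omega)).symm
      have hs := (hu m0 hm0).1
      have e0 := const_on hst m0 hs.1 hs.2.1
      have el := const_on hst l (by omega) le_rfl
      have hk0 : u k = 0 := by
        by_contra h; have := (hu k h).1.1; omega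
      have hl0 : u (l + 1) = 0 := by
        by_contra h; have := (hu _ h).1.2.1; omega
      rw [e0] at hm0
      constructor
      · by_contra he
        simp only [Bool.not_eq_true, Bool.not_eq_false] at he
        have := hc k
        simp [asrc, atgt, he, inS] at this
        exact hm0 ((this (by omega) (by omega) (by omega) (by omega) (by omega)).symm.trans hk0)
      · by_contra he
        simp only [Bool.not_eq_true, Bool.not_eq_false] at he
        have := hc l
        simp [asrc, atgt, he, inS] at this
        exact hm0 (el.symm.trans ((this (by omega) (by omega) (by omega) (by omega) (by omega)).symm.trans hl0))
    · rintro ⟨ek, el⟩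
      refine ⟨fun m => if k + 1 ≤ m ∧ m ≤ l then 1 else 0, ?_, ?_, l, ?_⟩
      · intro m hm
        have : k + 1 ≤ m ∧ m ≤ l := by by_contra h; exact hm (if_neg h)
        unfold inS; omega
      · intro m
        have a1 : m = k → ε m = true := by rintro rfl; exact ek
        have a2 : m = l → ε m = false := by rintro rfl; exact el
        intro hs ht
        unfold inS at hs ht
        have hiff : (k + 1 ≤ atgt ε m ∧ atgt ε m ≤ l) ↔ (k + 1 ≤ asrc ε m ∧ asrc ε m ≤ l) := by
          cases he : ε m <;> simp [asrc, atgt, he] at * <;> omega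
        simp only [hiff]
      · simp; omega

end ESPaper
end
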